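/- Let 0<s<1, let T:ℝ²→ℝ² be a linear map whose range is the one-dimensional subspace spanned by e_φ, let (a,b)∈[0,∞)² with (a,b)≠(0,0) and η∈ℝ, and set M=max{|T x| : x∈supp ρ_{a,b,η}}; assume M>0. Then the pushforward measure T_#ρ_{a,b,η} equals the pushforward of the measure ρ₁(t)dt on ℝ under the map t ↦ (M/R₁)·t·e_φ. -/

import Mathlib

/-!
Both sides are images of measures on `ℝ` under `t ↦ t • e_φ`. With `A` the linear map defining
`ρ_{a,b,η}`, the composition is `T (A z) = (p z₁ + q z₂) • e_φ` for some reals `p`, `q`. Since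
`ρ₂` is rotation invariant, the law of `p z₁ + q z₂` is that of `√(p² + q²) z₁`
(`map_linear_rho2meas`). Integrating `ρ₂` over vertical lines, the first marginal has density
proportional to `(R₂² - x²)₊^{(1+s)/2}`, hence is the dilate of `ρ₁` by `R₂ / R₁`
(`map_fst_rho2meas`). The constants agree by the evaluation of `∫ (1 - u²)^p` through the Beta
function (`lintegral_one_sub_sq_rpow`, `const_match`). Finally `M = √(p² + q²) R₂` (`max_eq`),
because `ρ₂` charges precisely the open sets that meet the open disc of radius `R₂`; so the
total dilation factor is `M / R₁`.
-/

open MeasureTheory Real Filter Set Topology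
open scoped ENNReal

noncomputable section

namespace Aniso

/-- The Euclidean norm on `ℝ × ℝ`. -/
def nrm (x : ℝ × ℝ) : ℝ := Real.sqrt (x.1 ^ 2 + x.2 ^ 2)

/-- The angle `θ(x) ∈ [-π, π)` of a nonzero point `x ∈ ℝ²`,
so that `x / |x| = (cos (ang x), sin (ang x))`. -/
def ang (x : ℝ × ℝ) : ℝ :=
  if Complex.arg ⟨x.1, x.2⟩ = π then -π else Complex.arg ⟨x.1, x.2⟩

/-- The unit vector `e_φ = (cos φ, sin φ)`. -/
def eVec (φ : ℝ) : ℝ × ℝ := (Real.cos φ, Real.sin φ)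

/-- The constant `τ_s = (2π)^{-s} Γ(s) cos(sπ/2)`. -/
def tauC (s : ℝ) : ℝ := (2 * π) ^ (-s) * Real.Gamma s * Real.cos (s * π / 2)

/-- The constant `c_s = π^{s-1} Γ((2-s)/2) / Γ(s/2)`. -/
def cC (s : ℝ) : ℝ := π ^ (s - 1) * Real.Gamma ((2 - s) / 2) / Real.Gamma (s / 2)

/-- Hypothesis (H): `Ω` is smooth, 2π-periodic, strictly positive and π-periodic. -/
def SatisfiesH (Ω : ℝ → ℝ) : Prop :=
  ContDiff ℝ (⊤ : ℕ∞) Ω ∧ (∀ θ, Ω (θ + 2 * π) = Ω θ) ∧ (∀ θ, 0 < Ω θ) ∧ ∀ θ, Ω (θ + π) = Ω θ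

/-- Hypothesis (h): `ω` is smooth, 2π-periodic, nonnegative, not identically zero,
π-periodic, and `ω(π/2) = 0`. -/
def Satisfiesh (ω : ℝ → ℝ) : Prop :=
  ContDiff ℝ (⊤ : ℕ∞) ω ∧ (∀ θ, ω (θ + 2 * π) = ω θ) ∧ (∀ θ, 0 ≤ ω θ) ∧ (∃ θ, ω θ ≠ 0) ∧
    (∀ θ, ω (θ + π) = ω θ) ∧ ω (π / 2) = 0

/-- The transformed angle function `Ω̃`. -/
def Omt (s : ℝ) (Ω : ℝ → ℝ) (φ : ℝ) : ℝ :=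
  tauC (2 - s) * (∫ θ in (-π)..π, |Real.cos (φ - θ)| ^ (-2 + s) * (Ω θ - Ω (φ + π / 2)))
    + cC s * Ω (φ + π / 2)

/-- The interaction potential `W(x) = |x|^{-s} Ω(θ(x)) + |x|²` as an `[0,∞]`-valued
kernel, with `W(0) = ∞`. -/
def Wkernel (s : ℝ) (Ω : ℝ → ℝ) (x : ℝ × ℝ) : ℝ≥0∞ :=
  if x = 0 then ⊤ else ENNReal.ofReal (nrm x ^ (-s) * Ω (ang x) + nrm x ^ 2)

/-- The interaction energy `E[ρ] = (1/2) ∬ W(x-y) dρ(y) dρ(x) ∈ [0,∞]`. -/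
def energy (s : ℝ) (Ω : ℝ → ℝ) (ρ : Measure (ℝ × ℝ)) : ℝ≥0∞ :=
  (1 / 2 : ℝ≥0∞) * ∫⁻ x, ∫⁻ y, Wkernel s Ω (x - y) ∂ρ ∂ρ

/-- The real-valued interaction potential (with junk value `0` at the origin,
which is Lebesgue negligible). -/
def Wr (s : ℝ) (Ω : ℝ → ℝ) (x : ℝ × ℝ) : ℝ := nrm x ^ (-s) * Ω (ang x) + nrm x ^ 2

/-- `ρ` minimizes the energy `E` among probability measures on `ℝ²`. -/
def IsMinimizer (E : Measure (ℝ × ℝ) → ℝ≥0∞) (ρ : Measure (ℝ × ℝ)) : Prop :=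
  IsProbabilityMeasure ρ ∧ ∀ μ : Measure (ℝ × ℝ), IsProbabilityMeasure μ → E ρ ≤ E μ

/-- `ρ` is the unique minimizer of `E` up to translation: it is a minimizer and every
minimizer is a translate of it. -/
def IsUniqueMinimizer (E : Measure (ℝ × ℝ) → ℝ≥0∞) (ρ : Measure (ℝ × ℝ)) : Prop :=
  IsMinimizer E ρ ∧ ∀ μ, IsMinimizer E μ → ∃ v : ℝ × ℝ, μ = Measure.map (fun x => x + v) ρ

def R2 (s : ℝ) : ℝ := (8 * Real.sin (s * π / 2) / (s ^ 2 * (2 + s) * π)) ^ (-(1 / (s + 2)))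

def C2 (s : ℝ) : ℝ := 4 * Real.sin (s * π / 2) / (s ^ 2 * π ^ 2)

/-- The density `ρ₂(x) = C₂ (R₂² - |x|²)₊^{s/2}`. -/
def rho2 (s : ℝ) (x : ℝ × ℝ) : ℝ := C2 s * (max (R2 s ^ 2 - nrm x ^ 2) 0) ^ (s / 2)

def rho2meas (s : ℝ) : Measure (ℝ × ℝ) := volume.withDensity fun x => ENNReal.ofReal (rho2 s x)

/-- Counterclockwise rotation of `ℝ²` by the angle `η`. -/
def Rot (η : ℝ) (x : ℝ × ℝ) : ℝ × ℝ :=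
  (x.1 * Real.cos η - x.2 * Real.sin η, x.1 * Real.sin η + x.2 * Real.cos η)

/-- The measure `ρ_{a,b,η}`: the pushforward of `ρ₂(x) dx` under `x ↦ R_η (a x₁, b x₂)`. -/
def rhoE (s a b η : ℝ) : Measure (ℝ × ℝ) :=
  Measure.map (fun x => Rot η (a * x.1, b * x.2)) (rho2meas s)

/-- The measure `ρ_{a,b} = ρ_{a,b,0}`. -/
def rhoAB (s a b : ℝ) : Measure (ℝ × ℝ) := rhoE s a b 0

/-- The Beta function. -/
def BetaR (x y : ℝ) : ℝ := Real.Gamma x * Real.Gamma y / Real.Gamma (x + y)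

def C1 (s : ℝ) : ℝ := 2 * Real.cos (s * π / 2) / (s * (s + 1) * π)

def R1 (s : ℝ) : ℝ := (C1 s * BetaR (1 / 2) ((3 + s) / 2)) ^ (-(1 / (s + 2)))

/-- The density `ρ₁(t) = C₁ (R₁² - t²)₊^{(1+s)/2}` on `ℝ`. -/
def rho1 (s t : ℝ) : ℝ := C1 s * (max (R1 s ^ 2 - t ^ 2) 0) ^ ((1 + s) / 2)

def rho1meas (s : ℝ) : Measure ℝ := volume.withDensity fun t => ENNReal.ofReal (rho1 s t)

/-- The measure `ρ_{1D}`: the pushforward of `ρ₁(t) dt` under `t ↦ (0, t)`. -/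
def rho1D (s : ℝ) : Measure (ℝ × ℝ) := Measure.map (fun t : ℝ => ((0 : ℝ), t)) (rho1meas s)

/-- The support of a measure: points all of whose neighborhoods have positive measure. -/
def msupport {α : Type*} [TopologicalSpace α] [MeasurableSpace α] (μ : Measure α) : Set α :=
  {x | ∀ U ∈ 𝓝 x, 0 < μ U}

def Acoef (s : ℝ) (Ω : ℝ → ℝ) (a b : ℝ) : ℝ :=
  tauC s * (R1 s / R2 s) ^ (2 + s) *
    ∫ φ in (-π)..π,
      (a ^ 2 * Real.cos φ ^ 2 + b ^ 2 * Real.sin φ ^ 2) ^ (-(2 + s) / 2) *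
        Real.cos φ ^ 2 * Omt s Ω φ

def Bcoef (s : ℝ) (Ω : ℝ → ℝ) (a b : ℝ) : ℝ :=
  tauC s * (R1 s / R2 s) ^ (2 + s) *
    ∫ φ in (-π)..π,
      (a ^ 2 * Real.cos φ ^ 2 + b ^ 2 * Real.sin φ ^ 2) ^ (-(2 + s) / 2) *
        Real.sin φ ^ 2 * Omt s Ω φ

def Dcoef (s : ℝ) (Ω : ℝ → ℝ) (a b : ℝ) : ℝ :=
  tauC s * (R1 s / R2 s) ^ (2 + s) *
    ∫ φ in (-π)..π,
      (a ^ 2 * Real.cos φ ^ 2 + b ^ 2 * Real.sin φ ^ 2) ^ (-(2 + s) / 2) *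
        (Real.cos φ * Real.sin φ) * Omt s Ω φ

def Mfun (s : ℝ) (Ω : ℝ → ℝ) (a b : ℝ) : ℝ :=
  tauC s * (R1 s / R2 s) ^ (2 + s) *
    ∫ φ in (-π)..π, (a ^ 2 * Real.cos φ ^ 2 + b ^ 2 * Real.sin φ ^ 2) ^ (-s / 2) * Omt s Ω φ

def calE (s : ℝ) (Ω : ℝ → ℝ) (a b : ℝ) : ℝ := Mfun s Ω a b + s / 2 * (a ^ 2 + b ^ 2)

/-- A measure has compact support. -/
def HasCompactSupportM (ρ : Measure (ℝ × ℝ)) : Prop :=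
  ∃ K : Set (ℝ × ℝ), IsCompact K ∧ ρ Kᶜ = 0

/-- The linear interpolation `(1-t) ρ₀ + t ρ₁`. -/
def mix (ρ₀ ρ₁ : Measure (ℝ × ℝ)) (t : ℝ) : Measure (ℝ × ℝ) :=
  ENNReal.ofReal (1 - t) • ρ₀ + ENNReal.ofReal t • ρ₁

/-- Linear interpolation convexity (LIC): for any two distinct compactly supported
probability measures of finite energy with the same center of mass, the energy is
strictly convex along their linear interpolation. -/
def LIC (s : ℝ) (Ω : ℝ → ℝ) : Prop :=
  ∀ ρ₀ ρ₁ : Measure (ℝ × ℝ), IsProbabilityMeasure ρ₀ → IsProbabilityMeasure ρ₁ →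
    HasCompactSupportM ρ₀ → HasCompactSupportM ρ₁ →
    energy s Ω ρ₀ < ⊤ → energy s Ω ρ₁ < ⊤ → ρ₀ ≠ ρ₁ →
    (∫ x, x ∂ρ₀) = (∫ x, x ∂ρ₁) →
    StrictConvexOn ℝ (Set.Icc (0 : ℝ) 1) fun t => (energy s Ω (mix ρ₀ ρ₁ t)).toReal

/-- The interaction energy of a bounded compactly supported signed density. -/
def energyR (s : ℝ) (Ω : ℝ → ℝ) (μ : ℝ × ℝ → ℝ) : ℝ :=
  (1 / 2) * ∫ x : ℝ × ℝ, (∫ y : ℝ × ℝ, Wr s Ω (x - y) * μ y) * μ x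

/-- The logarithmic potential `W_log(x) = -ln|x| + Ω(θ(x)) + |x|²` (real valued,
with junk value at the origin). -/
def Wlog (Ω : ℝ → ℝ) (x : ℝ × ℝ) : ℝ := -Real.log (nrm x) + Ω (ang x) + nrm x ^ 2

def WlogKernel (Ω : ℝ → ℝ) (x : ℝ × ℝ) : ℝ≥0∞ :=
  if x = 0 then ⊤ else ENNReal.ofReal (Wlog Ω x)

/-- The logarithmic interaction energy. -/
def energyLog (Ω : ℝ → ℝ) (ρ : Measure (ℝ × ℝ)) : ℝ≥0∞ :=
  (1 / 2 : ℝ≥0∞) * ∫⁻ x, ∫⁻ y, WlogKernel Ω (x - y) ∂ρ ∂ρ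

/-- The family `W_{(s)}(x) = |x|^{-s} (1/s + Ω(θ(x))) - 1/s + |x|²`. -/
def Wsfam (s : ℝ) (Ω : ℝ → ℝ) (x : ℝ × ℝ) : ℝ :=
  nrm x ^ (-s) * (1 / s + Ω (ang x)) - 1 / s + nrm x ^ 2

/-- The transformed angle function of `W_{(s)}`. -/
def Omts (s : ℝ) (Ω : ℝ → ℝ) (φ : ℝ) : ℝ :=
  tauC (2 - s) * (∫ θ in (-π)..π, |Real.cos (φ - θ)| ^ (-2 + s) * (Ω θ - Ω (φ + π / 2)))
    + cC s * (1 / s + Ω (φ + π / 2))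

/-- The truncated integral appearing in the principal value defining `Ω̃_log`. -/
def pvInt (Ω : ℝ → ℝ) (φ δ : ℝ) : ℝ :=
  ∫ θ in {θ : ℝ | θ ∈ Set.Icc (-π) π ∧ δ ≤ |Real.cos (φ - θ)|},
    |Real.cos (φ - θ)| ^ (-(2 : ℝ)) * (Ω θ - Ω (φ + π / 2))

def OmtLogFam (Ω : ℝ → ℝ) (φ δ : ℝ) : ℝ :=
  -((2 * π) ^ (-(2 : ℝ))) * pvInt Ω φ δ + (2 * π)⁻¹

/-- The transformed angle function `Ω̃_log`, defined as the principal value limit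
(via `limUnder`, which returns the limit whenever it exists). -/
def OmtLog (Ω : ℝ → ℝ) (φ : ℝ) : ℝ := limUnder (𝓝[>] (0 : ℝ)) (OmtLogFam Ω φ)

/-- The closed elliptical region `B(0; a, b)`. -/
def ellipseSet (a b : ℝ) : Set (ℝ × ℝ) := {x | x.1 ^ 2 / a ^ 2 + x.2 ^ 2 / b ^ 2 ≤ 1}

def ALog (Ω : ℝ → ℝ) (a b : ℝ) : ℝ :=
  ∫ φ in (-π)..π,
    (a ^ 2 * Real.cos φ ^ 2 + b ^ 2 * Real.sin φ ^ 2)⁻¹ * Real.cos φ ^ 2 * OmtLog Ω φ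

def BLog (Ω : ℝ → ℝ) (a b : ℝ) : ℝ :=
  ∫ φ in (-π)..π,
    (a ^ 2 * Real.cos φ ^ 2 + b ^ 2 * Real.sin φ ^ 2)⁻¹ * Real.sin φ ^ 2 * OmtLog Ω φ

def DLog (Ω : ℝ → ℝ) (a b : ℝ) : ℝ :=
  ∫ φ in (-π)..π,
    (a ^ 2 * Real.cos φ ^ 2 + b ^ 2 * Real.sin φ ^ 2)⁻¹ *
      (Real.cos φ * Real.sin φ) * OmtLog Ω φ

/-- The uniform probability measure on the rotated ellipse `B(0; a, b, η)`. -/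
def unifEllipse (a b η : ℝ) : Measure (ℝ × ℝ) :=
  volume.withDensity ((Rot η '' ellipseSet a b).indicator fun _ => ENNReal.ofReal ((π * a * b)⁻¹))

/-- The pushforward of the density `(2/(πb²)) (b² - t²)₊^{1/2} dt` under `t ↦ R_η (0, t)`. -/
def semicirc (b η : ℝ) : Measure (ℝ × ℝ) :=
  Measure.map (fun t : ℝ => Rot η (0, t))
    (volume.withDensity fun t =>
      ENNReal.ofReal (2 / (π * b ^ 2) * (max (b ^ 2 - t ^ 2) 0) ^ ((1 : ℝ) / 2)))

/-- The vertical semicircle measure `ρ_{1D}` for the logarithmic case. -/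
def rho1Dlog : Measure (ℝ × ℝ) :=
  Measure.map (fun t : ℝ => ((0 : ℝ), t))
    (volume.withDensity fun t => ENNReal.ofReal (2 / π * (max (1 - t ^ 2) 0) ^ ((1 : ℝ) / 2)))

/-- The measure `ψ(t) dt` placed on the vertical axis. -/
def rhoPsi (ψ : ℝ → ℝ) : Measure (ℝ × ℝ) :=
  Measure.map (fun t : ℝ => ((0 : ℝ), t)) (volume.withDensity fun t => ENNReal.ofReal (ψ t))


/-! ### The integral of `(1 - u²)^p` -/

/-- The value of `∫_{-1}^{1} (1 - u²)^p du`, that is `B(1/2, p + 1)`, for `p > 0`. -/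
def betaK (p : ℝ) : ℝ := √π * Real.Gamma (p + 1) / Real.Gamma (p + 3 / 2)

lemma betaK_pos {p : ℝ} (hp : 0 < p) : 0 < betaK p := by
  have h1 := Real.Gamma_pos_of_pos (show 0 < p + 1 by linarith)
  have h2 := Real.Gamma_pos_of_pos (show 0 < p + 3 / 2 by linarith)
  unfold betaK
  positivity

lemma lintegral_comp_mul_left_real {c : ℝ} (hc : c ≠ 0) {F : ℝ → ℝ≥0∞} (hF : Measurable F) :
    ∫⁻ x, F (c * x) = ENNReal.ofReal |c⁻¹| * ∫⁻ x, F x := by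
  rw [← lintegral_map (μ := volume) hF (measurable_const_mul c), Real.map_volume_mul_left hc,
    lintegral_smul_measure, smul_eq_mul]

lemma betaPDF_symm_eq {p : ℝ} (hp : 0 < p) (x : ℝ) :
    ProbabilityTheory.betaPDF (p + 1) (p + 1) x =
      ENNReal.ofReal (1 / ProbabilityTheory.beta (p + 1) (p + 1) * (4 : ℝ) ^ (-p)) *
        ENNReal.ofReal ((max (1 - (2 * x - 1) ^ 2) 0) ^ p) := by
  have hb := ProbabilityTheory.beta_pos (show 0 < p + 1 by linarith) (show 0 < p + 1 by linarith)
  rw [← ENNReal.ofReal_mul (by positivity), ProbabilityTheory.betaPDF_eq]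
  congr 1
  split_ifs with h
  · obtain ⟨h0, h1⟩ := h
    have h1' : 0 < 1 - x := by linarith
    have e : 1 - (2 * x - 1) ^ 2 = 4 * (x * (1 - x)) := by ring
    rw [e, max_eq_left (by positivity), Real.mul_rpow (by norm_num) (by positivity),
      Real.mul_rpow h0.le h1'.le, Real.rpow_neg (by norm_num)]
    have : (4 : ℝ) ^ p ≠ 0 := by positivity
    simp only [add_sub_cancel_right]
    field_simp
  · have : 1 - (2 * x - 1) ^ 2 ≤ 0 := by
      by_contra! hlt
      apply h
      constructor <;> nlinarith
    rw [max_eq_right this, Real.zero_rpow hp.ne', mul_zero]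

/-- The Beta density with equal parameters is, after the affine change `u = 2x - 1`, a multiple of
`(1 - u²)^p`; Legendre duplication turns its normalization into `betaK p`. -/
lemma lintegral_one_sub_sq_rpow {p : ℝ} (hp : 0 < p) :
    ∫⁻ u : ℝ, ENNReal.ofReal ((max (1 - u ^ 2) 0) ^ p) = ENNReal.ofReal (betaK p) := by
  have hp1 : 0 < p + 1 := by linarith
  have hb := ProbabilityTheory.beta_pos hp1 hp1
  have h1 := ProbabilityTheory.lintegral_betaPDF_eq_one hp1 hp1
  simp_rw [betaPDF_symm_eq hp] at h1
  rw [lintegral_const_mul _ (by fun_prop)] at h1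
  have h2 : ∫⁻ x : ℝ, ENNReal.ofReal ((max (1 - (2 * x - 1) ^ 2) 0) ^ p) =
      ENNReal.ofReal |(2 : ℝ)⁻¹| * ∫⁻ u : ℝ, ENNReal.ofReal ((max (1 - u ^ 2) 0) ^ p) := by
    rw [lintegral_comp_mul_left_real (c := 2) two_ne_zero
      (F := fun y => ENNReal.ofReal ((max (1 - (y - 1) ^ 2) 0) ^ p)) (by fun_prop),
      lintegral_sub_right_eq_self (fun y => ENNReal.ofReal ((max (1 - y ^ 2) 0) ^ p)) 1]
  rw [h2, ← mul_assoc, ← ENNReal.ofReal_mul (by positivity)] at h1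
  have hK : 1 / ProbabilityTheory.beta (p + 1) (p + 1) * (4 : ℝ) ^ (-p) * |(2 : ℝ)⁻¹|
      = (betaK p)⁻¹ := by
    have hd := Real.Gamma_mul_Gamma_add_half (p + 1)
    have g1 := Real.Gamma_pos_of_pos hp1
    have g2 := Real.Gamma_pos_of_pos (show 0 < p + 3 / 2 by linarith)
    have g3 := Real.Gamma_pos_of_pos (show 0 < 2 * (p + 1) by linarith)
    rw [show p + 1 + 1 / 2 = p + 3 / 2 by ring] at hd
    have e4 : (2 : ℝ) ^ (1 - 2 * (p + 1)) = (4 : ℝ) ^ (-p) * 2⁻¹ := by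
      rw [show (4 : ℝ) = 2 ^ (2 : ℝ) by norm_num, ← Real.rpow_mul (by norm_num),
        ← Real.rpow_neg_one, ← Real.rpow_add (by norm_num)]
      congr 1; ring
    rw [e4] at hd
    unfold ProbabilityTheory.beta betaK
    rw [show p + 1 + (p + 1) = 2 * (p + 1) by ring, abs_of_pos (by norm_num)]
    have : 0 < √π := by positivity
    generalize (4 : ℝ) ^ (-p) = w at hd ⊢
    generalize Real.Gamma (p + 1) = x at hd g1 ⊢
    generalize Real.Gamma (p + 3 / 2) = y at hd g2 ⊢
    generalize Real.Gamma (2 * (p + 1)) = z at hd g3 ⊢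
    field_simp
    linear_combination -2 * hd
  rw [hK] at h1
  have hKp := betaK_pos hp
  rw [ENNReal.ofReal_inv_of_pos hKp] at h1
  rw [mul_comm] at h1
  rw [ENNReal.eq_inv_of_mul_eq_one_left h1, inv_inv]

/-- The fibre integral of the two-dimensional profile over a vertical line. -/
lemma lintegral_fibre {p : ℝ} (hp : 0 < p) (m : ℝ) :
    ∫⁻ y : ℝ, ENNReal.ofReal ((max (m - y ^ 2) 0) ^ p) =
      ENNReal.ofReal (betaK p * (max m 0) ^ (p + 1 / 2)) := by
  rcases le_or_gt m 0 with hm | hm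
  · rw [max_eq_right hm, Real.zero_rpow (by linarith), mul_zero, ENNReal.ofReal_zero]
    have : ∀ y : ℝ, ENNReal.ofReal ((max (m - y ^ 2) 0) ^ p) = 0 := fun y => by
      rw [max_eq_right (by nlinarith [sq_nonneg y]), Real.zero_rpow hp.ne', ENNReal.ofReal_zero]
    simp [this]
  · have hq : 0 < √m := Real.sqrt_pos.2 hm
    have key : ∀ y : ℝ, ENNReal.ofReal ((max (m - y ^ 2) 0) ^ p) =
        ENNReal.ofReal (m ^ p) * ENNReal.ofReal ((max (1 - ((√m)⁻¹ * y) ^ 2) 0) ^ p) := fun y => by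
      rw [← ENNReal.ofReal_mul (by positivity), ← Real.mul_rpow hm.le (le_max_right _ _),
        mul_max_of_nonneg _ _ hm.le, mul_zero, mul_pow, inv_pow, Real.sq_sqrt hm.le]
      congr 4
      field_simp
    simp_rw [key]
    rw [lintegral_const_mul _ (by fun_prop),
      lintegral_comp_mul_left_real (inv_ne_zero hq.ne')
        (F := fun y => ENNReal.ofReal ((max (1 - y ^ 2) 0) ^ p)) (by fun_prop),
      lintegral_one_sub_sq_rpow hp, ← ENNReal.ofReal_mul (by positivity),
      ← ENNReal.ofReal_mul (by positivity), max_eq_left hm.le, Real.rpow_add hm, inv_inv,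
      abs_of_pos hq, Real.sqrt_eq_rpow]
    congr 1; ring

/-! ### Normalizing constants -/

lemma sin_half_pos {s : ℝ} (hs0 : 0 < s) (hs1 : s < 1) : 0 < Real.sin (s * π / 2) :=
  Real.sin_pos_of_pos_of_lt_pi (by positivity) (by nlinarith [Real.pi_pos])

lemma cos_half_pos {s : ℝ} (hs0 : 0 < s) (hs1 : s < 1) : 0 < Real.cos (s * π / 2) :=
  Real.cos_pos_of_mem_Ioo ⟨by nlinarith [Real.pi_pos], by nlinarith [Real.pi_pos]⟩

lemma C2_pos {s : ℝ} (hs0 : 0 < s) (hs1 : s < 1) : 0 < C2 s := by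
  have := sin_half_pos hs0 hs1
  unfold C2; positivity

lemma C1_pos {s : ℝ} (hs0 : 0 < s) (hs1 : s < 1) : 0 < C1 s := by
  have := cos_half_pos hs0 hs1
  unfold C1; positivity

lemma BetaR_pos {x y : ℝ} (hx : 0 < x) (hy : 0 < y) : 0 < BetaR x y := by
  have h1 := Real.Gamma_pos_of_pos hx
  have h2 := Real.Gamma_pos_of_pos hy
  have h3 := Real.Gamma_pos_of_pos (add_pos hx hy)
  unfold BetaR; positivity

lemma R2_pos {s : ℝ} (hs0 : 0 < s) (hs1 : s < 1) : 0 < R2 s := by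
  have := sin_half_pos hs0 hs1
  unfold R2; positivity

lemma R1_pos {s : ℝ} (hs0 : 0 < s) (hs1 : s < 1) : 0 < R1 s := by
  have := C1_pos hs0 hs1
  have := BetaR_pos (show (0 : ℝ) < 1 / 2 by norm_num) (show 0 < (3 + s) / 2 by linarith)
  unfold R1; positivity

lemma rpow_neg_one_div_rpow {x q : ℝ} (hx : 0 ≤ x) (hq : q ≠ 0) :
    (x ^ (-(1 / q))) ^ q = x⁻¹ := by
  rw [← Real.rpow_mul hx, show -(1 / q) * q = -1 by field_simp, Real.rpow_neg_one]

/-- The normalizing constants of `ρ₂` and `ρ₁` match along a one-dimensional projection. -/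
lemma const_match {s : ℝ} (hs0 : 0 < s) (hs1 : s < 1) :
    C2 s * betaK (s / 2) * R2 s ^ (s + 2) = C1 s * R1 s ^ (s + 2) := by
  have hsin := sin_half_pos hs0 hs1
  have hC1 := C1_pos hs0 hs1
  have hB := BetaR_pos (show (0 : ℝ) < 1 / 2 by norm_num) (show 0 < (3 + s) / 2 by linarith)
  have h2 : R2 s ^ (s + 2) = (8 * Real.sin (s * π / 2) / (s ^ 2 * (2 + s) * π))⁻¹ :=
    rpow_neg_one_div_rpow (by positivity) (by linarith)
  have h1 : R1 s ^ (s + 2) = (C1 s * BetaR (1 / 2) ((3 + s) / 2))⁻¹ :=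
    rpow_neg_one_div_rpow (by positivity) (by linarith)
  have g1 := Real.Gamma_pos_of_pos (show 0 < s / 2 + 1 by linarith)
  have g2 := Real.Gamma_pos_of_pos (show 0 < s / 2 + 3 / 2 by linarith)
  have hπ : 0 < √π := by positivity
  have hBv : BetaR (1 / 2) ((3 + s) / 2) =
      √π * Real.Gamma (s / 2 + 3 / 2) / ((s / 2 + 1) * Real.Gamma (s / 2 + 1)) := by
    rw [BetaR, Real.Gamma_one_half_eq, ← Real.Gamma_add_one (by positivity),
      show (3 + s) / 2 = s / 2 + 3 / 2 by ring,
      show 1 / 2 + (s / 2 + 3 / 2) = s / 2 + 1 + 1 by ring]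
  rw [h1, h2, mul_inv, mul_inv_cancel_left₀ hC1.ne', hBv, C2, betaK]
  field_simp
  rw [Real.sq_sqrt Real.pi_pos.le]
  ring

/-! ### The first marginal of `ρ₂` -/

lemma measurable_nrm : Measurable nrm := by unfold nrm; fun_prop

lemma continuous_nrm : Continuous nrm := by unfold nrm; fun_prop

lemma nrm_sq (x : ℝ × ℝ) : nrm x ^ 2 = x.1 ^ 2 + x.2 ^ 2 := Real.sq_sqrt (by positivity)

lemma measurable_rho2 (s : ℝ) : Measurable (rho2 s) := by
  have := measurable_nrm
  unfold rho2; fun_prop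

lemma measurable_rho1 (s : ℝ) : Measurable (rho1 s) := by
  unfold rho1; fun_prop

/-- The first marginal of `ρ₂` is the dilate of `ρ₁` by `R₂ / R₁`: by Fubini both sides have a
density proportional to `(R₂² - x²)₊^{(1+s)/2}`, with the same factor by `const_match`. -/
lemma map_fst_rho2meas {s : ℝ} (hs0 : 0 < s) (hs1 : s < 1) :
    Measure.map Prod.fst (rho2meas s) =
      Measure.map (fun t : ℝ => R2 s / R1 s * t) (rho1meas s) := by
  have hR1 := R1_pos hs0 hs1
  have hR2 := R2_pos hs0 hs1
  have hC2 := C2_pos hs0 hs1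
  have hK := betaK_pos (show 0 < s / 2 by linarith)
  have hr2 := (measurable_rho2 s).ennreal_ofReal
  have hr1 := (measurable_rho1 s).ennreal_ofReal
  set c := R2 s / R1 s with hc
  have hc0 : 0 < c := by positivity
  ext B hB
  have hB' : MeasurableSet ((fun t : ℝ => c * t) ⁻¹' B) := measurable_const_mul c hB
  have hB2 : MeasurableSet (Prod.fst ⁻¹' B : Set (ℝ × ℝ)) := measurable_fst hB
  rw [Measure.map_apply measurable_fst hB, Measure.map_apply (measurable_const_mul c) hB, rho2meas,
    rho1meas, withDensity_apply _ hB2, withDensity_apply _ hB', ← lintegral_indicator hB2,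
    ← lintegral_indicator hB', Measure.volume_eq_prod,
    lintegral_prod _ (hr2.indicator hB2).aemeasurable]
  set G : ℝ → ℝ≥0∞ := B.indicator fun x =>
    ENNReal.ofReal (C2 s * betaK (s / 2) * (max (R2 s ^ 2 - x ^ 2) 0) ^ (s / 2 + 1 / 2)) with hG
  have hGm : Measurable G := Measurable.indicator (by fun_prop) hB
  have hL : ∀ x : ℝ, ∫⁻ y : ℝ, (Prod.fst ⁻¹' B : Set (ℝ × ℝ)).indicator
      (fun z => ENNReal.ofReal (rho2 s z)) (x, y) = G x := fun x => by
    by_cases hx : x ∈ B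
    · simp only [hG, indicator_of_mem hx]
      have e : ∀ y : ℝ, (Prod.fst ⁻¹' B : Set (ℝ × ℝ)).indicator
          (fun z => ENNReal.ofReal (rho2 s z)) (x, y) =
          ENNReal.ofReal (C2 s) *
            ENNReal.ofReal ((max (R2 s ^ 2 - x ^ 2 - y ^ 2) 0) ^ (s / 2)) := fun y => by
        rw [indicator_of_mem (by exact hx), rho2, nrm_sq, ENNReal.ofReal_mul hC2.le, sub_sub]
      simp_rw [e]
      rw [lintegral_const_mul _ (by fun_prop), lintegral_fibre (by positivity),
        ← ENNReal.ofReal_mul hC2.le, mul_assoc]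
    · have e : ∀ y : ℝ, (Prod.fst ⁻¹' B : Set (ℝ × ℝ)).indicator
          (fun z => ENNReal.ofReal (rho2 s z)) (x, y) = 0 := fun y =>
        indicator_of_notMem (by exact hx) _
      simp [e, hG, indicator_of_notMem hx]
  have hR : ∀ t : ℝ, ((fun t : ℝ => c * t) ⁻¹' B).indicator
      (fun t => ENNReal.ofReal (rho1 s t)) t = ENNReal.ofReal c * G (c * t) := fun t => by
    by_cases ht : c * t ∈ B
    · rw [indicator_of_mem (by exact ht), hG, indicator_of_mem ht, ← ENNReal.ofReal_mul hc0.le]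
      have e1 : R2 s ^ 2 - (c * t) ^ 2 = c ^ 2 * (R1 s ^ 2 - t ^ 2) := by
        rw [hc]; field_simp
      have e2 : max (c ^ 2 * (R1 s ^ 2 - t ^ 2)) 0 = c ^ 2 * max (R1 s ^ 2 - t ^ 2) 0 := by
        rw [mul_max_of_nonneg _ _ (by positivity), mul_zero]
      have e3 : (c ^ 2) ^ (s / 2 + 1 / 2) * c = c ^ (s + 2) := by
        rw [← Real.rpow_natCast, ← Real.rpow_mul hc0.le, ← Real.rpow_add_one hc0.ne']
        congr 1; push_cast; ring
      have e4 : C1 s = C2 s * betaK (s / 2) * c ^ (s + 2) := by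
        rw [hc, Real.div_rpow hR2.le hR1.le, ← mul_div_assoc, const_match hs0 hs1,
          mul_div_cancel_right₀ _ (by positivity)]
      rw [rho1, e1, e2, Real.mul_rpow (by positivity) (le_max_right _ _), e4, ← e3,
        show (1 + s) / 2 = s / 2 + 1 / 2 by ring]
      congr 1; ring
    · rw [indicator_of_notMem (by exact ht), hG, indicator_of_notMem ht, mul_zero]
  simp_rw [hL, hR]
  rw [lintegral_const_mul _ (by fun_prop), lintegral_comp_mul_left_real hc0.ne' hGm, ← mul_assoc,
    ← ENNReal.ofReal_mul hc0.le, abs_of_pos (by positivity), mul_inv_cancel₀ hc0.ne',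
    ENNReal.ofReal_one, one_mul]

/-! ### Rotation invariance of `ρ₂` -/

lemma continuous_Rot (η : ℝ) : Continuous (Rot η) := by unfold Rot; fun_prop

lemma nrm_Rot (η : ℝ) (x : ℝ × ℝ) : nrm (Rot η x) = nrm x := by
  unfold nrm Rot
  congr 1
  linear_combination (x.1 ^ 2 + x.2 ^ 2) * Real.sin_sq_add_cos_sq η

lemma measurePreserving_Rot (η : ℝ) : MeasurePreserving (Rot η) volume volume := by
  refine ⟨(continuous_Rot η).measurable, ?_⟩
  set L : (ℝ × ℝ) →ₗ[ℝ] ℝ × ℝ := Matrix.toLin (Module.Basis.finTwoProd ℝ)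
    (Module.Basis.finTwoProd ℝ) !![Real.cos η, -Real.sin η; Real.sin η, Real.cos η] with hL
  have hd : LinearMap.det L = 1 := by
    rw [hL, LinearMap.det_toLin, Matrix.det_fin_two_of]
    linear_combination Real.sin_sq_add_cos_sq η
  have hLR : (L : ℝ × ℝ → ℝ × ℝ) = Rot η := by
    funext x
    rw [hL, Matrix.toLin_finTwoProd_apply, Rot]
    ext <;> simp <;> ring
  have h := Measure.map_linearMap_addHaar_eq_smul_addHaar (volume : Measure (ℝ × ℝ))
    (f := L) (by rw [hd]; exact one_ne_zero)
  rw [hLR, hd] at h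
  simpa using h

lemma map_Rot_rho2meas (s η : ℝ) : Measure.map (Rot η) (rho2meas s) = rho2meas s := by
  have hm := (measurePreserving_Rot η)
  ext B hB
  rw [Measure.map_apply hm.measurable hB, rho2meas, withDensity_apply _ (hm.measurable hB),
    withDensity_apply _ hB, ← hm.setLIntegral_comp_preimage hB (measurable_rho2 s).ennreal_ofReal]
  simp only [rho2, nrm_Rot]

lemma exists_polar (p q : ℝ) :
    ∃ ψ : ℝ, p = √(p ^ 2 + q ^ 2) * Real.cos ψ ∧ q = √(p ^ 2 + q ^ 2) * Real.sin ψ := by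
  refine ⟨Complex.arg ⟨p, q⟩, ?_, ?_⟩
  · have := Complex.norm_mul_cos_arg ⟨p, q⟩
    rw [Complex.norm_eq_sqrt_sq_add_sq] at this
    exact this.symm
  · have := Complex.norm_mul_sin_arg ⟨p, q⟩
    rw [Complex.norm_eq_sqrt_sq_add_sq] at this
    exact this.symm

/-- Every one-dimensional projection of the radial measure `ρ₂` is a dilate of its first
marginal. -/
lemma map_linear_rho2meas (s p q : ℝ) :
    Measure.map (fun x : ℝ × ℝ => p * x.1 + q * x.2) (rho2meas s) =
      Measure.map (fun x : ℝ => √(p ^ 2 + q ^ 2) * x) (Measure.map Prod.fst (rho2meas s)) := by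
  obtain ⟨ψ, h1, h2⟩ := exists_polar p q
  have hRm := (continuous_Rot (-ψ)).measurable
  conv_rhs => rw [← map_Rot_rho2meas s (-ψ)]
  rw [Measure.map_map (by fun_prop) (by fun_prop), Measure.map_map (by fun_prop) hRm]
  congr 1
  funext x
  simp only [Function.comp, Rot, Real.cos_neg, Real.sin_neg]
  linear_combination x.1 * h1 + x.2 * h2

/-! ### The maximum of `|T x|` over the support -/

lemma rho2meas_outside {s : ℝ} (hs0 : 0 < s) (hs1 : s < 1) {U : Set (ℝ × ℝ)}
    (hU : MeasurableSet U) (h : ∀ z ∈ U, R2 s < nrm z) : rho2meas s U = 0 := by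
  rw [rho2meas, withDensity_apply _ hU]
  refine setLIntegral_eq_zero hU fun z hz => ?_
  have := R2_pos hs0 hs1
  have hz' := h z hz
  simp only [rho2]
  rw [max_eq_right (by nlinarith), Real.zero_rpow (by linarith), mul_zero]
  simp

lemma rho2meas_pos {s : ℝ} (hs0 : 0 < s) (hs1 : s < 1) {U : Set (ℝ × ℝ)}
    (hU : IsOpen U) {z : ℝ × ℝ} (hz : z ∈ U) (hzR : nrm z < R2 s) : 0 < rho2meas s U := by
  have hC2 := C2_pos hs0 hs1
  have hV : IsOpen (U ∩ {w | nrm w < R2 s}) :=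
    hU.inter (isOpen_lt continuous_nrm continuous_const)
  have hpos : 0 < rho2meas s (U ∩ {w | nrm w < R2 s}) := by
    rw [rho2meas, withDensity_apply _ hV.measurableSet,
      setLIntegral_pos_iff (measurable_rho2 s).ennreal_ofReal]
    refine lt_of_lt_of_le (hV.measure_pos volume ⟨z, hz, hzR⟩) (measure_mono fun w hw => ?_)
    refine ⟨?_, hw⟩
    have hw2 : nrm w < R2 s := hw.2
    have h0 : 0 ≤ nrm w := Real.sqrt_nonneg _
    have : 0 < max (R2 s ^ 2 - nrm w ^ 2) 0 := lt_max_of_lt_left (by nlinarith)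
    have : 0 < rho2 s w := by unfold rho2; positivity
    simpa using this
  exact hpos.trans_le (measure_mono inter_subset_left)

lemma nrm_smul_eVec (r φ : ℝ) : nrm (r • eVec φ) = |r| := by
  rw [nrm, eVec, ← Real.sqrt_sq_eq_abs]
  congr 1
  simp only [Prod.smul_mk, smul_eq_mul]
  linear_combination r ^ 2 * Real.sin_sq_add_cos_sq φ

lemma abs_linear_le (p q : ℝ) (z : ℝ × ℝ) :
    |p * z.1 + q * z.2| ≤ √(p ^ 2 + q ^ 2) * nrm z := by
  rw [nrm, ← Real.sqrt_mul (by positivity)]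
  apply Real.abs_le_sqrt
  nlinarith [sq_nonneg (p * z.2 - q * z.1)]

/-- The linear functional `p z₁ + q z₂` has maximum `√(p² + q²) R₂` on the closed disc of radius
`R₂`, and the support of `A_# ρ₂` is the image of that disc under `A`. Only two consequences are
needed: the complement of the disc is `ρ₂`-null, which bounds `M` above, and the image of the
maximizer lies in the support, which bounds `M` below. -/
lemma max_eq {s : ℝ} (hs0 : 0 < s) (hs1 : s < 1) {T : ℝ × ℝ → ℝ × ℝ} (hT : Continuous T)
    {A : ℝ × ℝ → ℝ × ℝ} (hA : Continuous A) {φ p q : ℝ}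
    (hTA : ∀ z, T (A z) = (p * z.1 + q * z.2) • eVec φ) {M : ℝ}
    (hM : IsGreatest {r : ℝ | ∃ x ∈ msupport (Measure.map A (rho2meas s)), r = nrm (T x)} M)
    (hM0 : 0 < M) :
    M = √(p ^ 2 + q ^ 2) * R2 s := by
  have hR2 := R2_pos hs0 hs1
  set r := √(p ^ 2 + q ^ 2) with hr
  have hr0 : 0 ≤ r := Real.sqrt_nonneg _
  have hle : M ≤ r * R2 s := by
    obtain ⟨x, hx, rfl⟩ := hM.1
    by_contra! hlt
    have hop : IsOpen {y | r * R2 s < nrm (T y)} :=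
      isOpen_lt continuous_const (continuous_nrm.comp hT)
    have h := hx _ (hop.mem_nhds hlt)
    rw [Measure.map_apply hA.measurable hop.measurableSet] at h
    refine h.ne' (rho2meas_outside hs0 hs1 (hop.preimage hA).measurableSet fun z hz => ?_)
    have hz : r * R2 s < nrm (T (A z)) := hz
    rw [hTA, nrm_smul_eVec] at hz
    exact lt_of_mul_lt_mul_left (hz.trans_le (abs_linear_le p q z)) hr0
  refine le_antisymm hle ?_
  have hrpos : 0 < r := by
    rcases hr0.eq_or_lt with h | h
    · rw [← h] at hle; linarith
    · exact h
  have hrsq : r ^ 2 = p ^ 2 + q ^ 2 := Real.sq_sqrt (by positivity)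
  -- The maximizer lies on the boundary circle, where every neighbourhood meets the open ball.
  set v : ℝ × ℝ := (R2 s / r * p, R2 s / r * q) with hv
  have hnv : nrm v = R2 s := by
    rw [nrm, show v.1 ^ 2 + v.2 ^ 2 = R2 s ^ 2 by
      simp only [hv]; field_simp; rw [hrsq], Real.sqrt_sq hR2.le]
  refine hM.2 ⟨A v, fun U hU => ?_, ?_⟩
  · obtain ⟨V, hVU, hVo, hAV⟩ := mem_nhds_iff.1 hU
    have hW : IsOpen (A ⁻¹' V) := hVo.preimage hA
    have hlim : Tendsto (fun t : ℝ => t • v) (𝓝[<] 1) (𝓝 v) := by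
      have : Tendsto (fun t : ℝ => t • v) (𝓝 1) (𝓝 ((1 : ℝ) • v)) :=
        (continuous_id.smul continuous_const).tendsto 1
      rw [one_smul] at this
      exact this.mono_left nhdsWithin_le_nhds
    have hev := (hlim.eventually (hW.mem_nhds hAV)).and
      (Ioo_mem_nhdsLT (show (0 : ℝ) < 1 by norm_num))
    obtain ⟨t, htV, ht0, ht1⟩ := hev.exists
    have hnt : nrm (t • v) = t * R2 s := by
      rw [← hnv, nrm, nrm, ← Real.sqrt_sq ht0.le, ← Real.sqrt_mul (by positivity),
        Real.sqrt_sq ht0.le]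
      congr 1
      simp only [Prod.smul_fst, Prod.smul_snd, smul_eq_mul]
      ring
    have := rho2meas_pos hs0 hs1 hW htV (by rw [hnt]; nlinarith)
    rw [← Measure.map_apply hA.measurable hVo.measurableSet] at this
    exact this.trans_le (measure_mono hVU)
  · have e : p * v.1 + q * v.2 = r * R2 s := by
      simp only [hv]; field_simp; rw [hrsq]
    rw [hTA, e, nrm_smul_eVec, abs_of_pos (by positivity)]

/-! ### Projection of `ρ_{a,b,η}` -/

/-- the pushforward of `ρ_{a,b,η}` under a rank-one linear map `T` with range
spanned by `e_φ` is the rescaled one-dimensional profile `ρ₁` placed along `e_φ`, where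
`M = max{|Tx| : x ∈ supp ρ_{a,b,η}}`. -/
theorem statement5 (s : ℝ) (hs0 : 0 < s) (hs1 : s < 1)
    (T : (ℝ × ℝ) →ₗ[ℝ] ℝ × ℝ) (φ : ℝ)
    (hrange : LinearMap.range T = Submodule.span ℝ {eVec φ})
    (a b η : ℝ) (ha : 0 ≤ a) (hb : 0 ≤ b) (hab : (a, b) ≠ (0, 0))
    (M : ℝ) (hM : IsGreatest {r : ℝ | ∃ x ∈ msupport (rhoE s a b η), r = nrm (T x)} M)
    (hM0 : 0 < M) :
    Measure.map (fun x => T x) (rhoE s a b η) =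
      Measure.map (fun t : ℝ => (M / R1 s * t) • eVec φ) (rho1meas s) := by
  have hR1 := R1_pos hs0 hs1
  -- `T = ℓ • e_φ` for the linear functional `ℓ x = ⟨T x, e_φ⟩`.
  have hT : ∀ x, T x = ((T x).1 * Real.cos φ + (T x).2 * Real.sin φ) • eVec φ := fun x => by
    have hx : T x ∈ Submodule.span ℝ {eVec φ} := hrange ▸ LinearMap.mem_range_self T x
    obtain ⟨c, hc⟩ := Submodule.mem_span_singleton.1 hx
    rw [← hc]
    congr 1
    simp only [eVec, Prod.smul_mk, smul_eq_mul]
    linear_combination (-c) * Real.sin_sq_add_cos_sq φ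
  have hTc : Continuous T := T.continuous_of_finiteDimensional
  set A : ℝ × ℝ → ℝ × ℝ := fun x => Rot η (a * x.1, b * x.2) with hA
  have hAc : Continuous A := (continuous_Rot η).comp (by fun_prop)
  set ℓ : ℝ × ℝ → ℝ := fun x => (T x).1 * Real.cos φ + (T x).2 * Real.sin φ with hℓ
  have hTA : ∀ z, T (A z) = (ℓ (A (1, 0)) * z.1 + ℓ (A (0, 1)) * z.2) • eVec φ := fun z => by
    have e : A z = z.1 • A (1, 0) + z.2 • A (0, 1) := by
      simp only [hA, Rot]
      ext <;> simp <;> ring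
    rw [hT]
    congr 1
    rw [e]
    simp only [hℓ, map_add, map_smul, Prod.fst_add, Prod.snd_add, Prod.smul_fst, Prod.smul_snd,
      smul_eq_mul]
    ring
  generalize ℓ (A (1, 0)) = p at hTA
  generalize ℓ (A (0, 1)) = q at hTA
  have hMeq := max_eq hs0 hs1 hTc hAc hTA hM hM0
  rw [rhoE, Measure.map_map hTc.measurable hAc.measurable,
    show (fun x => T x) ∘ A = (fun t : ℝ => t • eVec φ) ∘ fun z => p * z.1 + q * z.2 from
      funext hTA,
    ← Measure.map_map (by fun_prop) (by fun_prop), map_linear_rho2meas,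
    map_fst_rho2meas hs0 hs1, Measure.map_map (by fun_prop) (by fun_prop),
    Measure.map_map (by fun_prop) (by fun_prop)]
  congr 1
  funext t
  simp only [Function.comp, hMeq]
  congr 1
  ring

end Aniso
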